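/- (D step of Wasserstein Collaborative Filtering.) Let γ > 0, let M ∈ ℝ_{≥0}^{n×s} be a cost matrix, let p_1, …, p_m ∈ Σ_n have strictly positive entries, let K = e^{−M/γ} entrywise, and let Λ ∈ ℝ^{k×m} be fixed. Suppose D* ∈ ℝ^{s×k} minimizes D ↦ Σ_{u=1}^m W_γ(p_u, (DΛ)_u) over all D ∈ ℝ^{s×k} such that every column (DΛ)_u of DΛ lies in Σ_s. Then there exists G* ∈ ℝ^{s×m} minimizing G ↦ Σ_{u=1}^m H_{p_u}*(G_u), where H_{p_u}*(g) = sup_{q ∈ Σ_s}(⟨g,q⟩ − W_γ(p_u,q)) and G_u is the u-th column of G, over the set {G ∈ ℝ^{s×m} : G Λᵀ = 0}, such that for every u, (D*Λ)_u = α_u ⊙ Kᵀ(p_u ⊘ Kα_u) with α_u = e^{G_u*/γ} entrywise. Moreover, if Λ has full row rank, the minimizer D* is unique. -/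

import Mathlib

open Finset

noncomputable section

/-- The simplex Σ_n: nonnegative vectors in ℝ^n summing to 1. -/
def simplex (n : ℕ) : Set (Fin n → ℝ) :=
  {p | (∀ i, 0 ≤ p i) ∧ ∑ i, p i = 1}

/-- The transport polytope U(p,q): nonnegative n×s matrices with row sums p
and column sums q. -/
def transportPolytope {n s : ℕ} (p : Fin n → ℝ) (q : Fin s → ℝ) :
    Set (Matrix (Fin n) (Fin s) ℝ) :=
  {T | (∀ i j, 0 ≤ T i j) ∧ (∀ i, ∑ j, T i j = p i) ∧ (∀ j, ∑ i, T i j = q j)}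

/-- Frobenius inner product ⟨T,M⟩ = Σ_{i,j} T_{ij} M_{ij}. -/
def frob {n s : ℕ} (T M : Matrix (Fin n) (Fin s) ℝ) : ℝ :=
  ∑ i, ∑ j, T i j * M i j

/-- The entropy h(T) = −Σ_{i,j} T_{ij} log T_{ij} (Real.log 0 = 0, so 0 log 0 = 0). -/
def entropy {n s : ℕ} (T : Matrix (Fin n) (Fin s) ℝ) : ℝ :=
  -∑ i, ∑ j, T i j * Real.log (T i j)

/-- The Wasserstein distance W(p,q) = inf_{T ∈ U(p,q)} ⟨T,M⟩. -/
def W {n s : ℕ} (M : Matrix (Fin n) (Fin s) ℝ) (p : Fin n → ℝ) (q : Fin s → ℝ) : ℝ :=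
  sInf ((fun T => frob T M) '' transportPolytope p q)

/-- The smoothed Wasserstein distance W_γ(p,q) = inf_{T ∈ U(p,q)} ⟨T,M⟩ − γ h(T). -/
def Wsmooth {n s : ℕ} (γ : ℝ) (M : Matrix (Fin n) (Fin s) ℝ)
    (p : Fin n → ℝ) (q : Fin s → ℝ) : ℝ :=
  sInf ((fun T => frob T M - γ * entropy T) '' transportPolytope p q)

/-- K = e^{−M/γ}, entrywise. -/
def Kmat {n s : ℕ} (γ : ℝ) (M : Matrix (Fin n) (Fin s) ℝ) : Matrix (Fin n) (Fin s) ℝ :=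
  fun i j => Real.exp (-M i j / γ)

/-- Legendre–Fenchel conjugate H_p*(g) = sup_{q ∈ Σ_s} (⟨g,q⟩ − W_γ(p,q)). -/
def Hstar {n s : ℕ} (γ : ℝ) (M : Matrix (Fin n) (Fin s) ℝ)
    (p : Fin n → ℝ) (g : Fin s → ℝ) : ℝ :=
  sSup ((fun q => (∑ j, g j * q j) - Wsmooth γ M p q) '' simplex s)

/-- The gradient formula ∇H_p*(g) = α ⊙ Kᵀ (p ⊘ Kα), where α = e^{g/γ} entrywise. -/
def HstarGrad {n s : ℕ} (γ : ℝ) (M : Matrix (Fin n) (Fin s) ℝ)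
    (p : Fin n → ℝ) (g : Fin s → ℝ) : Fin s → ℝ :=
  fun j => Real.exp (g j / γ) *
    Matrix.mulVec (Kmat γ M).transpose
      (fun i => p i / Matrix.mulVec (Kmat γ M) (fun j' => Real.exp (g j' / γ)) i) j

/-!
The smoothed transport cost of any plan with marginals `p` and `q` equals its value at the Gibbs
plan `diag(p ⊘ Kα) K diag(α)`, `α = e^{g/γ}`, plus `⟨g, q - ∇H_p*(g)⟩`, plus `γ` times a
Kullback–Leibler divergence. Hence `⟨g, q⟩ ≤ H_p*(g) + W_γ(p, q)`, with equality exactly when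
`q = ∇H_p*(g)`. If `G Λᵀ = 0`, then `∑ ⟨G_u, (DΛ)_u⟩ = 0`, so the primal and dual objectives have
nonnegative sum, which vanishes exactly when every `(DΛ)_u` is `∇H_{p_u}*(G_u)`. A single such `G`
is therefore dual optimal and determines `DΛ` for every minimizer `D`.

To find `G`, choose optimal plans `T_u` for a minimizer `D`. Together they minimize the total
smoothed cost over all families of plans whose second marginals are the columns of some `D' Λ`.
Since `x log x` has slope `-∞` at `0`, `T_u` is positive on every row `i` with `(p_u)_i > 0`.
Stationarity under feasible perturbations then splits the gradient on these rows into row potentials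
plus the columns of a matrix `G` with `G Λᵀ = 0`, which makes every `T_u` a Gibbs plan.
-/

section EntropicCost

variable {ι : Type*} [Fintype ι] {γ : ℝ} {c x y e : ι → ℝ} {C : Set (ι → ℝ)}

/-- The linear cost with negative-entropy regularization, `∑ xᵢcᵢ + γ ∑ xᵢ log xᵢ`, on an arbitrary
finite index set, so that it applies both to one transport plan and to a family of plans. -/
def entropicCost (γ : ℝ) (c x : ι → ℝ) : ℝ :=
  ∑ i, (x i * c i + γ * (x i * Real.log (x i)))

/-- The gradient of `entropicCost γ c` at `x`. It is a gradient only in the coordinates where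
`x i ≠ 0`; elsewhere `Real.log 0 = 0` makes it a junk value. -/
def entropicGradient (γ : ℝ) (c x : ι → ℝ) : ι → ℝ :=
  fun i => c i + γ * (Real.log (x i) + 1)

/-- The generalized Kullback–Leibler divergence `∑ yᵢ log (yᵢ / xᵢ) - yᵢ + xᵢ` of `y` from `x`, for
`y` vanishing wherever `x` does. -/
def relEntropy (y x : ι → ℝ) : ℝ :=
  ∑ i, x i * InformationTheory.klFun (y i / x i)

lemma relEntropy_nonneg (hx : 0 ≤ x) (hy : 0 ≤ y) : 0 ≤ relEntropy y x :=
  sum_nonneg fun i _ =>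
    mul_nonneg (hx i) (InformationTheory.klFun_nonneg (div_nonneg (hy i) (hx i)))

lemma relEntropy_eq_zero_iff (hx : 0 ≤ x) (hy : 0 ≤ y) (hxy : ∀ i, x i = 0 → y i = 0) :
    relEntropy y x = 0 ↔ y = x := by
  have hratio (i) : 0 ≤ y i / x i := div_nonneg (hy i) (hx i)
  rw [relEntropy, sum_eq_zero_iff_of_nonneg fun i _ =>
    mul_nonneg (hx i) (InformationTheory.klFun_nonneg (hratio i)), funext_iff]
  simp only [mem_univ, true_imp_iff]
  refine forall_congr' fun i => ?_
  rcases eq_or_ne (x i) 0 with hxi | hxi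
  · simp [hxi, hxy i hxi]
  · rw [mul_eq_zero_iff_left hxi, InformationTheory.klFun_eq_zero_iff (hratio i),
      div_eq_one_iff_eq hxi]

lemma entropicCost_eq_add_relEntropy (hxy : ∀ i, x i = 0 → y i = 0) :
    entropicCost γ c y =
      entropicCost γ c x + entropicGradient γ c x ⬝ᵥ (y - x) + γ * relEntropy y x := by
  simp only [entropicCost, entropicGradient, relEntropy, dotProduct, mul_sum, ← sum_add_distrib]
  refine sum_congr rfl fun i _ => ?_
  rcases eq_or_ne (x i) 0 with hxi | hxi
  · simp [hxi, hxy i hxi]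
  · have hlog : y i * Real.log (y i / x i) = y i * (Real.log (y i) - Real.log (x i)) := by
      rcases eq_or_ne (y i) 0 with hyi | hyi
      · simp [hyi]
      · rw [Real.log_div hyi hxi]
    have hkl : x i * InformationTheory.klFun (y i / x i) =
        y i * Real.log (y i / x i) + x i - y i := by
      rw [InformationTheory.klFun_apply]
      field_simp
    rw [hkl, hlog, Pi.sub_apply]
    ring

lemma continuous_entropicCost (γ : ℝ) (c : ι → ℝ) : Continuous (entropicCost γ c) :=
  continuous_finsetSum _ fun i _ => ((continuous_apply i).mul_const _).add
    ((Real.continuous_mul_log.comp (continuous_apply i)).const_mul γ)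

lemma hasDerivAt_entropicCost_add_smul (γ : ℝ) (c : ι → ℝ) (hxe : ∀ i, x i = 0 → e i = 0) :
    HasDerivAt (fun t : ℝ => entropicCost γ c (x + t • e)) (entropicGradient γ c x ⬝ᵥ e) 0 := by
  refine HasDerivAt.fun_sum fun i _ => ?_
  rcases eq_or_ne (x i) 0 with hxi | hxi
  · simpa [hxi, hxe i hxi] using hasDerivAt_const (0 : ℝ) (0 : ℝ)
  · have hline : HasDerivAt (fun t : ℝ => x i + t * e i) (e i) 0 := by
      simpa using ((hasDerivAt_id (0 : ℝ)).mul_const (e i)).const_add (x i)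
    have hmulLog := (Real.hasDerivAt_mul_log hxi).comp_of_eq (0 : ℝ) hline (by simp)
    refine ((hline.mul_const (c i)).add (hmulLog.const_mul γ)).congr_deriv ?_
    simp only [entropicGradient]
    ring

lemma entropicGradient_dotProduct_eq_zero (hx : 0 ≤ x) (hmin : IsMinOn (entropicCost γ c) C x)
    (hxe : ∀ i, x i = 0 → e i = 0) (hC : ∀ t : ℝ, 0 ≤ x + t • e → x + t • e ∈ C) :
    entropicGradient γ c x ⬝ᵥ e = 0 := by
  have hnonneg : ∀ᶠ t in nhds (0 : ℝ), 0 ≤ x + t • e := by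
    refine Filter.eventually_all.2 fun i => ?_
    rcases (hx i).eq_or_lt' with hxi | hxi
    · simp [hxi, hxe i hxi]
    · have hcont : ContinuousAt (fun t : ℝ => x i + t * e i) 0 := by fun_prop
      exact (hcont.eventually (lt_mem_nhds (by simpa using hxi))).mono fun _ => le_of_lt
  refine IsLocalMin.hasDerivAt_eq_zero ?_ (hasDerivAt_entropicCost_add_smul γ c hxe)
  filter_upwards [hnonneg] with t ht
  simpa using hmin (hC t ht)

-- The extra term `t log t` is what makes the slope at `t = 0` infinite.
lemma entropicCost_combo_le {t : ℝ} (hγ : 0 ≤ γ) (c : ι → ℝ) (hx : 0 ≤ x) (hy : 0 ≤ y)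
    (ht : t ∈ Set.Icc (0 : ℝ) 1) {i : ι} (hxi : x i = 0) :
    entropicCost γ c ((1 - t) • x + t • y) ≤
      (1 - t) * entropicCost γ c x + t * entropicCost γ c y + γ * (t * Real.log t * y i) := by
  classical
  have hsingle : γ * (t * Real.log t * y i) =
      ∑ j, γ * Pi.single (M := fun _ => ℝ) i (t * Real.log t * y i) j := by
    rw [← mul_sum, Fintype.sum_pi_single']
  rw [hsingle]
  simp only [entropicCost, mul_sum, ← sum_add_distrib]
  refine sum_le_sum fun j _ => ?_
  suffices h : ((1 - t) * x j + t * y j) * Real.log ((1 - t) * x j + t * y j) ≤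
      (1 - t) * (x j * Real.log (x j)) + t * (y j * Real.log (y j)) +
        Pi.single (M := fun _ => ℝ) i (t * Real.log t * y i) j by
    have := mul_le_mul_of_nonneg_left h hγ
    simp only [Pi.add_apply, Pi.smul_apply, smul_eq_mul]
    linarith
  rcases eq_or_ne j i with rfl | hji
  · rcases ht.1.eq_or_lt' with rfl | ht0
    · simp
    rcases (hy j).eq_or_lt' with hyj | hyj
    · simp [hxi, hyj]
    · rw [hxi, mul_zero, zero_add, Real.log_mul ht0.ne' hyj.ne', Pi.single_eq_same]
      exact le_of_eq (by ring)
  · rw [Pi.single_eq_of_ne hji, add_zero]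
    exact Real.convexOn_mul_log.2 (hx j) (hy j) (sub_nonneg.2 ht.2) ht.1 (sub_add_cancel 1 t)

lemma pos_of_isMinOn_entropicCost (hγ : 0 < γ) (hC : Convex ℝ C) (hC0 : ∀ z ∈ C, 0 ≤ z)
    (hxC : x ∈ C) (hmin : IsMinOn (entropicCost γ c) C x) (hyC : y ∈ C) {i : ι} (hyi : 0 < y i) :
    0 < x i := by
  refine (hC0 x hxC i).lt_of_ne' fun hxi => ?_
  have hbound (r : ℝ) (hr : 0 ≤ r) :
      γ * y i * r ≤ entropicCost γ c y - entropicCost γ c x := by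
    have ht : Real.exp (-r) ∈ Set.Icc (0 : ℝ) 1 := ⟨(Real.exp_pos _).le, by simpa using hr⟩
    have hle := (hmin (hC hxC hyC (sub_nonneg.2 ht.2) ht.1 (sub_add_cancel 1 _))).trans
      (entropicCost_combo_le hγ.le c (hC0 x hxC) (hC0 y hyC) ht hxi)
    rw [Real.log_exp] at hle
    refine le_of_mul_le_mul_left ?_ (Real.exp_pos (-r))
    linarith
  obtain ⟨r, hr⟩ := exists_nat_gt
    ((entropicCost γ c y - entropicCost γ c x) / (γ * y i))
  rw [div_lt_iff₀' (mul_pos hγ hyi)] at hr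
  exact (hbound r r.cast_nonneg).not_gt hr

end EntropicCost

lemma nonempty_of_mem_simplex {n : ℕ} {p : Fin n → ℝ} (hp : p ∈ simplex n) :
    Nonempty (Fin n) := by
  by_contra! h
  simpa using hp.2

lemma exists_pos_of_mem_simplex {n : ℕ} {p : Fin n → ℝ} (hp : p ∈ simplex n) : ∃ i, 0 < p i := by
  by_contra! h
  have hle := sum_nonpos fun i (_ : i ∈ univ) => h i
  linarith [hp.2]

section Transport

variable {n s : ℕ} {γ : ℝ} {M T T' : Matrix (Fin n) (Fin s) ℝ} {p p' : Fin n → ℝ}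
  {q q' : Fin s → ℝ}

/-- The objective of the smoothed transport problem whose value is `Wsmooth`. -/
def smoothedCost (γ : ℝ) (M T : Matrix (Fin n) (Fin s) ℝ) : ℝ :=
  frob T M - γ * entropy T

lemma smoothedCost_eq_entropicCost (γ : ℝ) (M T : Matrix (Fin n) (Fin s) ℝ) :
    smoothedCost γ M T =
      entropicCost γ (fun t : Fin n × Fin s => M t.1 t.2) (fun t => T t.1 t.2) := by
  simp only [smoothedCost, frob, entropy, entropicCost, Fintype.sum_prod_type, sum_add_distrib,
    ← mul_sum]
  ring

lemma continuous_smoothedCost (γ : ℝ) (M : Matrix (Fin n) (Fin s) ℝ) :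
    Continuous (smoothedCost γ M) := by
  simp only [funext (smoothedCost_eq_entropicCost γ M)]
  exact (continuous_entropicCost _ _).comp
    (continuous_pi fun t => continuous_id.matrix_elem t.1 t.2)

lemma vecMulVec_mem_transportPolytope (hp : p ∈ simplex n) (hq : q ∈ simplex s) :
    Matrix.vecMulVec p q ∈ transportPolytope p q := by
  refine ⟨fun i j => mul_nonneg (hp.1 i) (hq.1 j), fun i => ?_, fun j => ?_⟩
  · simp only [Matrix.vecMulVec_apply, ← mul_sum, hq.2, mul_one]
  · simp only [Matrix.vecMulVec_apply, ← sum_mul, hp.2, one_mul]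

lemma mem_simplex_of_mem_transportPolytope (hp : p ∈ simplex n) (hT : T ∈ transportPolytope p q) :
    q ∈ simplex s := by
  refine ⟨fun j => (hT.2.2 j) ▸ sum_nonneg fun i _ => hT.1 i j, ?_⟩
  simp only [← hT.2.2, ← hp.2, ← hT.2.1]
  exact sum_comm

lemma eq_of_mem_transportPolytope_right (hT : T ∈ transportPolytope p q)
    (hT' : T ∈ transportPolytope p' q') : q = q' :=
  funext fun j => (hT.2.2 j).symm.trans (hT'.2.2 j)

lemma add_smul_mem_transportPolytope {a b : ℝ} (ha : 0 ≤ a) (hb : 0 ≤ b)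
    (hT : T ∈ transportPolytope p q) (hT' : T' ∈ transportPolytope p' q') :
    a • T + b • T' ∈ transportPolytope (a • p + b • p') (a • q + b • q') := by
  refine ⟨fun i j => add_nonneg (mul_nonneg ha (hT.1 i j)) (mul_nonneg hb (hT'.1 i j)),
    fun i => ?_, fun j => ?_⟩
  · simp [sum_add_distrib, ← mul_sum, hT.2.1, hT'.2.1]
  · simp [sum_add_distrib, ← mul_sum, hT.2.2, hT'.2.2]

lemma eq_zero_of_mem_transportPolytope (hT : T ∈ transportPolytope p q) {i : Fin n}
    (hpi : p i = 0) (j : Fin s) : T i j = 0 := by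
  rw [← hT.2.1 i, sum_eq_zero_iff_of_nonneg fun j _ => hT.1 i j] at hpi
  exact hpi j (mem_univ j)

lemma isCompact_transportPolytope (p : Fin n → ℝ) (q : Fin s → ℝ) :
    IsCompact (transportPolytope p q) := by
  have hclosed : IsClosed (transportPolytope p q) := by
    simp only [transportPolytope, Set.ofPred_and, Set.ofPred_forall]
    refine IsClosed.inter ?_ (IsClosed.inter ?_ ?_)
    · exact isClosed_iInter fun i => isClosed_iInter fun j =>
        isClosed_le continuous_const (continuous_id.matrix_elem i j)
    · exact isClosed_iInter fun i => isClosed_eq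
        (continuous_finsetSum _ fun j _ => continuous_id.matrix_elem i j) continuous_const
    · exact isClosed_iInter fun j => isClosed_eq
        (continuous_finsetSum _ fun i _ => continuous_id.matrix_elem i j) continuous_const
  have hbox : IsCompact (Set.Icc (0 : Fin n → Fin s → ℝ) fun i _ => p i) := isCompact_Icc
  refine hbox.of_isClosed_subset hclosed fun T hT => ⟨hT.1, fun i j => ?_⟩
  exact (single_le_sum (f := fun j => T i j) (fun j _ => hT.1 i j) (mem_univ j)).trans_eq (hT.2.1 i)

lemma isLeast_Wsmooth (γ : ℝ) (M : Matrix (Fin n) (Fin s) ℝ) (hp : p ∈ simplex n)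
    (hq : q ∈ simplex s) :
    IsLeast (smoothedCost γ M '' transportPolytope p q) (Wsmooth γ M p q) :=
  ((isCompact_transportPolytope p q).image (continuous_smoothedCost γ M)).isLeast_sInf
    ⟨_, Set.mem_image_of_mem _ (vecMulVec_mem_transportPolytope hp hq)⟩

end Transport

section GibbsPlan

variable {n s : ℕ} {γ : ℝ} {M T : Matrix (Fin n) (Fin s) ℝ} {p : Fin n → ℝ} {q g : Fin s → ℝ}

/-- The transport plan `diag(p ⊘ Kα) K diag(α)` with `α = e^{g/γ}`: the rescaling of `K` with row
sums `p` and dual potential `g` on the columns. -/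
def gibbsPlan (γ : ℝ) (M : Matrix (Fin n) (Fin s) ℝ) (p : Fin n → ℝ) (g : Fin s → ℝ) :
    Matrix (Fin n) (Fin s) ℝ :=
  fun i j => p i / (Kmat γ M).mulVec (fun j' => Real.exp (g j' / γ)) i *
    (Kmat γ M i j * Real.exp (g j / γ))

lemma Kmat_mulVec_exp_pos [Nonempty (Fin s)] (γ : ℝ) (M : Matrix (Fin n) (Fin s) ℝ)
    (g : Fin s → ℝ) (i : Fin n) : 0 < (Kmat γ M).mulVec (fun j => Real.exp (g j / γ)) i :=
  sum_pos (f := fun j => Kmat γ M i j * Real.exp (g j / γ))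
    (fun _ _ => mul_pos (Real.exp_pos _) (Real.exp_pos _)) univ_nonempty

lemma gibbsPlan_mem_transportPolytope [Nonempty (Fin s)] (γ : ℝ) (M : Matrix (Fin n) (Fin s) ℝ)
    (hp : 0 ≤ p) (g : Fin s → ℝ) :
    gibbsPlan γ M p g ∈ transportPolytope p (HstarGrad γ M p g) := by
  have hK := Kmat_mulVec_exp_pos γ M g
  refine ⟨fun i j => mul_nonneg (div_nonneg (hp i) (hK i).le)
    (mul_pos (Real.exp_pos _) (Real.exp_pos _)).le, fun i => ?_, fun j => ?_⟩
  · simp only [gibbsPlan, ← mul_sum]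
    exact div_mul_cancel₀ (p i) (hK i).ne'
  · rw [HstarGrad, Matrix.mulVec, dotProduct, mul_sum]
    refine sum_congr rfl fun i _ => ?_
    rw [gibbsPlan, Matrix.transpose_apply]
    ring

lemma gibbsPlan_eq_zero_iff [Nonempty (Fin s)] {i : Fin n} {j : Fin s} :
    gibbsPlan γ M p g i j = 0 ↔ p i = 0 := by
  have hK := (Kmat_mulVec_exp_pos γ M g i).ne'
  simp [gibbsPlan, Kmat, hK]

lemma eq_gibbsPlan_of_scaling (hT : T ∈ transportPolytope p q) {b : Fin n → ℝ}
    (hb : ∀ i j, T i j = b i * (Kmat γ M i j * Real.exp (g j / γ))) : T = gibbsPlan γ M p g := by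
  ext i j
  have : Nonempty (Fin s) := ⟨j⟩
  have hp : p i = b i * (Kmat γ M).mulVec (fun j => Real.exp (g j / γ)) i := by
    simp only [← hT.2.1 i, hb, Matrix.mulVec, dotProduct, mul_sum]
  rw [gibbsPlan, hp, mul_div_cancel_right₀ _ (Kmat_mulVec_exp_pos γ M g i).ne', hb]

lemma eq_gibbsPlan_of_potentials (hγ : γ ≠ 0) (hT : T ∈ transportPolytope p q) {a : Fin n → ℝ}
    (hpos : ∀ i, p i ≠ 0 → ∀ j, 0 < T i j)
    (ha : ∀ i, p i ≠ 0 → ∀ j, M i j + γ * (Real.log (T i j) + 1) = a i + g j) :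
    T = gibbsPlan γ M p g := by
  refine eq_gibbsPlan_of_scaling hT
    (b := fun i => if p i = 0 then 0 else Real.exp (a i / γ - 1)) fun i j => ?_
  split_ifs with hpi
  · rw [eq_zero_of_mem_transportPolytope hT hpi, zero_mul]
  · rw [Kmat, ← Real.exp_add, ← Real.exp_add, ← Real.exp_log (hpos i hpi j)]
    congr 1
    have := ha i hpi j
    field_simp
    linarith

lemma entropicGradient_gibbsPlan [Nonempty (Fin s)] (hγ : γ ≠ 0) (g : Fin s → ℝ) {i : Fin n}
    (hpi : p i ≠ 0) (j : Fin s) :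
    M i j + γ * (Real.log (gibbsPlan γ M p g i j) + 1) =
      γ * (Real.log (p i / (Kmat γ M).mulVec (fun j' => Real.exp (g j' / γ)) i) + 1) + g j := by
  have hK := (Kmat_mulVec_exp_pos γ M g i).ne'
  rw [gibbsPlan, Kmat, ← Real.exp_add, Real.log_mul (div_ne_zero hpi hK) (Real.exp_ne_zero _),
    Real.log_exp]
  field_simp
  ring

-- The row potential of `gibbsPlan` contributes nothing: both plans have row sums `p`.
lemma smoothedCost_eq_gibbsPlan_add (hγ : γ ≠ 0) (hp : p ∈ simplex n) (hq : q ∈ simplex s)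
    (hT : T ∈ transportPolytope p q) (g : Fin s → ℝ) :
    smoothedCost γ M T = smoothedCost γ M (gibbsPlan γ M p g) + g ⬝ᵥ (q - HstarGrad γ M p g) +
      γ * relEntropy (fun t : Fin n × Fin s => T t.1 t.2) (fun t => gibbsPlan γ M p g t.1 t.2) := by
  have := nonempty_of_mem_simplex hq
  have hS := gibbsPlan_mem_transportPolytope γ M hp.1 g
  set S := gibbsPlan γ M p g with hS_def
  have hTS (i j) : S i j = 0 → T i j = 0 := fun h =>
    eq_zero_of_mem_transportPolytope hT (gibbsPlan_eq_zero_iff.1 h) j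
  rw [smoothedCost_eq_entropicCost, smoothedCost_eq_entropicCost,
    entropicCost_eq_add_relEntropy (x := fun t : Fin n × Fin s => S t.1 t.2) fun t => hTS t.1 t.2]
  congr 2
  set a : Fin n → ℝ := fun i =>
    γ * (Real.log (p i / (Kmat γ M).mulVec (fun j => Real.exp (g j / γ)) i) + 1)
  calc _ = ∑ i, ∑ j, (M i j + γ * (Real.log (S i j) + 1)) * (T i j - S i j) := by
        simp [dotProduct, entropicGradient, Fintype.sum_prod_type]
    _ = ∑ i, ∑ j, (a i + g j) * (T i j - S i j) := by
        refine sum_congr rfl fun i _ => sum_congr rfl fun j _ => ?_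
        rcases eq_or_ne (p i) 0 with hpi | hpi
        · rw [eq_zero_of_mem_transportPolytope hT hpi, eq_zero_of_mem_transportPolytope hS hpi,
            sub_zero, mul_zero, mul_zero]
        · rw [hS_def, entropicGradient_gibbsPlan hγ g hpi]
    _ = ∑ i, a i * ∑ j, (T i j - S i j) + ∑ j, g j * ∑ i, (T i j - S i j) := by
        simp only [add_mul, sum_add_distrib, mul_sum]
        rw [sum_comm (f := fun i j => g j * _)]
    _ = g ⬝ᵥ (q - HstarGrad γ M p g) := by
        simp [sum_sub_distrib, hT.2.1, hT.2.2, hS.2.1, hS.2.2, dotProduct]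

end GibbsPlan

section Conjugate

variable {n s : ℕ} {γ : ℝ} {M T : Matrix (Fin n) (Fin s) ℝ} {p : Fin n → ℝ} {q : Fin s → ℝ}

lemma HstarGrad_mem_simplex [Nonempty (Fin s)] (γ : ℝ) (M : Matrix (Fin n) (Fin s) ℝ)
    (hp : p ∈ simplex n) (g : Fin s → ℝ) : HstarGrad γ M p g ∈ simplex s :=
  mem_simplex_of_mem_transportPolytope hp (gibbsPlan_mem_transportPolytope γ M hp.1 g)

lemma dotProduct_sub_smoothedCost_le (hγ : 0 < γ) (hp : p ∈ simplex n)
    (hT : T ∈ transportPolytope p q) (g : Fin s → ℝ) :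
    g ⬝ᵥ q - smoothedCost γ M T ≤
      g ⬝ᵥ HstarGrad γ M p g - smoothedCost γ M (gibbsPlan γ M p g) := by
  have hq := mem_simplex_of_mem_transportPolytope hp hT
  have := nonempty_of_mem_simplex hq
  have hS := gibbsPlan_mem_transportPolytope γ M hp.1 g
  have hexpand := smoothedCost_eq_gibbsPlan_add (M := M) hγ.ne' hp hq hT g
  have hKL := mul_nonneg hγ.le
    (relEntropy_nonneg (fun t : Fin n × Fin s => hS.1 t.1 t.2) fun t => hT.1 t.1 t.2)
  rw [dotProduct_sub] at hexpand
  linarith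

lemma eq_gibbsPlan_of_dotProduct_sub_smoothedCost_eq (hγ : 0 < γ) (hp : p ∈ simplex n)
    (hT : T ∈ transportPolytope p q) {g : Fin s → ℝ}
    (heq : g ⬝ᵥ q - smoothedCost γ M T =
      g ⬝ᵥ HstarGrad γ M p g - smoothedCost γ M (gibbsPlan γ M p g)) :
    T = gibbsPlan γ M p g := by
  have hq := mem_simplex_of_mem_transportPolytope hp hT
  have := nonempty_of_mem_simplex hq
  have hS := gibbsPlan_mem_transportPolytope γ M hp.1 g
  have hexpand := smoothedCost_eq_gibbsPlan_add (M := M) hγ.ne' hp hq hT g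
  rw [dotProduct_sub] at hexpand
  have hKL : relEntropy (fun t : Fin n × Fin s => T t.1 t.2)
      (fun t => gibbsPlan γ M p g t.1 t.2) = 0 :=
    (mul_eq_zero_iff_left hγ.ne').1 (by linarith)
  have hTS : (fun t : Fin n × Fin s => T t.1 t.2) = fun t => gibbsPlan γ M p g t.1 t.2 :=
    (relEntropy_eq_zero_iff (fun t : Fin n × Fin s => hS.1 t.1 t.2)
      (fun t : Fin n × Fin s => hT.1 t.1 t.2) fun t : Fin n × Fin s => fun ht =>
        eq_zero_of_mem_transportPolytope hT (gibbsPlan_eq_zero_iff.1 ht) t.2).1 hKL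
  ext i j
  exact congrFun hTS (i, j)

lemma isGreatest_Hstar [Nonempty (Fin s)] (hγ : 0 < γ) (M : Matrix (Fin n) (Fin s) ℝ)
    (hp : p ∈ simplex n) (g : Fin s → ℝ) :
    IsGreatest ((fun q => g ⬝ᵥ q - Wsmooth γ M p q) '' simplex s)
      (g ⬝ᵥ HstarGrad γ M p g - smoothedCost γ M (gibbsPlan γ M p g)) := by
  have hq := HstarGrad_mem_simplex γ M hp g
  have hle : ∀ r ∈ (fun q => g ⬝ᵥ q - Wsmooth γ M p q) '' simplex s,
      r ≤ g ⬝ᵥ HstarGrad γ M p g - smoothedCost γ M (gibbsPlan γ M p g) := by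
    rintro _ ⟨q, hq, rfl⟩
    obtain ⟨T, hT, hTW⟩ := (isLeast_Wsmooth γ M hp hq).1
    simp only [← hTW]
    exact dotProduct_sub_smoothedCost_le hγ hp hT g
  have hW := (isLeast_Wsmooth γ M hp hq).2
    (Set.mem_image_of_mem _ (gibbsPlan_mem_transportPolytope γ M hp.1 g))
  exact ⟨⟨_, hq, (hle _ ⟨_, hq, rfl⟩).antisymm (sub_le_sub_left hW _)⟩, hle⟩

lemma Hstar_eq [Nonempty (Fin s)] (hγ : 0 < γ) (M : Matrix (Fin n) (Fin s) ℝ)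
    (hp : p ∈ simplex n) (g : Fin s → ℝ) :
    Hstar γ M p g = g ⬝ᵥ HstarGrad γ M p g - smoothedCost γ M (gibbsPlan γ M p g) :=
  (isGreatest_Hstar hγ M hp g).csSup_eq

lemma dotProduct_le_Hstar_add_Wsmooth (hγ : 0 < γ) (M : Matrix (Fin n) (Fin s) ℝ)
    (hp : p ∈ simplex n) (hq : q ∈ simplex s) (g : Fin s → ℝ) :
    g ⬝ᵥ q ≤ Hstar γ M p g + Wsmooth γ M p q := by
  have := nonempty_of_mem_simplex hq
  rw [Hstar_eq hγ M hp, ← sub_le_iff_le_add]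
  exact (isGreatest_Hstar hγ M hp g).2 ⟨q, hq, rfl⟩

lemma dotProduct_eq_Hstar_add_Wsmooth_iff (hγ : 0 < γ) (M : Matrix (Fin n) (Fin s) ℝ)
    (hp : p ∈ simplex n) (hq : q ∈ simplex s) (g : Fin s → ℝ) :
    g ⬝ᵥ q = Hstar γ M p g + Wsmooth γ M p q ↔ q = HstarGrad γ M p g := by
  have := nonempty_of_mem_simplex hq
  have hS := gibbsPlan_mem_transportPolytope γ M hp.1 g
  rw [Hstar_eq hγ M hp, ← sub_eq_iff_eq_add]
  constructor
  · intro heq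
    obtain ⟨T, hT, hTW⟩ := (isLeast_Wsmooth γ M hp hq).1
    have hTS := eq_gibbsPlan_of_dotProduct_sub_smoothedCost_eq hγ hp hT (hTW ▸ heq)
    exact eq_of_mem_transportPolytope_right hT (hTS ▸ hS)
  · rintro rfl
    refine le_antisymm ((isGreatest_Hstar hγ M hp g).2 ⟨_, hq, rfl⟩) ?_
    exact sub_le_sub_left ((isLeast_Wsmooth γ M hp hq).2 (Set.mem_image_of_mem _ hS)) _

end Conjugate

section Duality

variable {n s m k : ℕ} {γ : ℝ} {M : Matrix (Fin n) (Fin s) ℝ} {p : Fin m → Fin n → ℝ}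
  {Λ : Matrix (Fin k) (Fin m) ℝ} {D : Matrix (Fin s) (Fin k) ℝ} {G : Matrix (Fin s) (Fin m) ℝ}

lemma sum_dotProduct_col_eq_zero (hG : G * Λ.transpose = 0) (D : Matrix (Fin s) (Fin k) ℝ) :
    ∑ u, (fun j => G j u) ⬝ᵥ (fun j => (D * Λ) j u) = 0 := by
  calc ∑ u, (fun j => G j u) ⬝ᵥ (fun j => (D * Λ) j u) = (G * (D * Λ).transpose).trace :=
        sum_comm
    _ = 0 := by rw [Matrix.transpose_mul, ← Matrix.mul_assoc, hG, Matrix.zero_mul,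
        Matrix.trace_zero]

lemma sum_Hstar_add_sum_Wsmooth_nonneg (hγ : 0 < γ) (M : Matrix (Fin n) (Fin s) ℝ)
    (hp : ∀ u, p u ∈ simplex n) (hG : G * Λ.transpose = 0)
    (hD : ∀ u, (fun j => (D * Λ) j u) ∈ simplex s) :
    0 ≤ ∑ u, Hstar γ M (p u) (fun j => G j u) +
      ∑ u, Wsmooth γ M (p u) (fun j => (D * Λ) j u) := by
  rw [← sum_dotProduct_col_eq_zero hG D, ← sum_add_distrib]
  exact sum_le_sum fun u _ => dotProduct_le_Hstar_add_Wsmooth hγ M (hp u) (hD u) _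

lemma sum_Hstar_add_sum_Wsmooth_eq_zero_iff (hγ : 0 < γ) (M : Matrix (Fin n) (Fin s) ℝ)
    (hp : ∀ u, p u ∈ simplex n) (hG : G * Λ.transpose = 0)
    (hD : ∀ u, (fun j => (D * Λ) j u) ∈ simplex s) :
    ∑ u, Hstar γ M (p u) (fun j => G j u) + ∑ u, Wsmooth γ M (p u) (fun j => (D * Λ) j u) = 0 ↔
      ∀ u, (fun j => (D * Λ) j u) = HstarGrad γ M (p u) (fun j => G j u) := by
  rw [← sum_dotProduct_col_eq_zero hG D, ← sum_add_distrib, eq_comm,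
    sum_eq_sum_iff_of_le fun u _ => dotProduct_le_Hstar_add_Wsmooth hγ M (hp u) (hD u) _]
  simp only [mem_univ, true_imp_iff, dotProduct_eq_Hstar_add_Wsmooth_iff hγ M (hp _) (hD _)]

end Duality

section JointPlans

variable {n s m k : ℕ} {γ : ℝ} {M : Matrix (Fin n) (Fin s) ℝ} {p : Fin m → Fin n → ℝ}
  {Λ : Matrix (Fin k) (Fin m) ℝ} {D : Matrix (Fin s) (Fin k) ℝ}
  {X : Fin m × Fin n × Fin s → ℝ}

/-- The feasible families of transport plans of the D step: the `u`-th plan has first marginal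
`p u`, and the second marginals are the columns of `D * Λ` for a common dictionary `D`. A family is
encoded as a single vector indexed by `(u, i, j)`. -/
def jointPlans (p : Fin m → Fin n → ℝ) (Λ : Matrix (Fin k) (Fin m) ℝ) :
    Set (Fin m × Fin n × Fin s → ℝ) :=
  {X | ∃ D : Matrix (Fin s) (Fin k) ℝ, ∀ u,
    Matrix.of (fun i j => X (u, i, j)) ∈ transportPolytope (p u) (fun j => (D * Λ) j u)}

lemma nonneg_of_mem_jointPlans (hX : X ∈ jointPlans p Λ) : 0 ≤ X := by
  obtain ⟨D, hD⟩ := hX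
  exact fun t => (hD t.1).1 t.2.1 t.2.2

lemma convex_jointPlans (p : Fin m → Fin n → ℝ) (Λ : Matrix (Fin k) (Fin m) ℝ) :
    Convex ℝ (jointPlans (s := s) p Λ) := by
  rintro X ⟨D, hD⟩ Y ⟨D', hD'⟩ a b ha hb hab
  refine ⟨a • D + b • D', fun u => ?_⟩
  have hcombo := add_smul_mem_transportPolytope ha hb (hD u) (hD' u)
  have hcol : (fun j => ((a • D + b • D') * Λ) j u) =
      a • (fun j => (D * Λ) j u) + b • fun j => (D' * Λ) j u := by
    ext j
    simp [Matrix.add_mul]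
  rw [Convex.combo_self hab, ← hcol] at hcombo
  exact hcombo

-- Replacing every atom of the dictionary by its mean makes all the second marginals uniform.
lemma exists_mem_jointPlans_forall_pos (hp : ∀ u, p u ∈ simplex n)
    (hD : ∀ u, (fun j => (D * Λ) j u) ∈ simplex s) :
    ∃ Y ∈ jointPlans (s := s) p Λ, ∀ u i j, 0 < p u i → 0 < Y (u, i, j) := by
  refine ⟨fun t => p t.1 t.2.1 * (s : ℝ)⁻¹,
    ⟨Matrix.of fun _ l => (s : ℝ)⁻¹ * ∑ j, D j l, fun u => ?_⟩, fun u i j hpi => ?_⟩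
  · have := nonempty_of_mem_simplex (hD u)
    have huniform : (fun _ => (s : ℝ)⁻¹) ∈ simplex s :=
      ⟨fun _ => by positivity, by simp [Fin.pos_iff_nonempty.2 this |>.ne']⟩
    have hcol (j) : (Matrix.of (fun (_ : Fin s) l => (s : ℝ)⁻¹ * ∑ j, D j l) * Λ) j u =
        (s : ℝ)⁻¹ :=
      calc ∑ l, (s : ℝ)⁻¹ * (∑ j, D j l) * Λ l u = (s : ℝ)⁻¹ * ∑ j, (D * Λ) j u := by
            simp only [mul_assoc, sum_mul, ← mul_sum, Matrix.mul_apply]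
            rw [sum_comm]
        _ = (s : ℝ)⁻¹ := by rw [(hD u).2, mul_one]
    simp only [hcol]
    exact vecMulVec_mem_transportPolytope (hp u) huniform
  · have : 0 < s := j.pos
    positivity

/-- The gradient of the total smoothed cost of a family of plans. -/
abbrev jointGradient (γ : ℝ) (M : Matrix (Fin n) (Fin s) ℝ) (X : Fin m × Fin n × Fin s → ℝ) :
    Fin m × Fin n × Fin s → ℝ :=
  entropicGradient γ (fun t => M t.2.1 t.2.2) X

lemma isMinOn_jointPlans (hp : ∀ u, p u ∈ simplex n)
    (hmin : ∀ D' : Matrix (Fin s) (Fin k) ℝ, (∀ u, (fun j => (D' * Λ) j u) ∈ simplex s) →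
      ∑ u, Wsmooth γ M (p u) (fun j => (D * Λ) j u) ≤
        ∑ u, Wsmooth γ M (p u) (fun j => (D' * Λ) j u))
    {T : Fin m → Matrix (Fin n) (Fin s) ℝ}
    (hTW : ∀ u, smoothedCost γ M (T u) = Wsmooth γ M (p u) (fun j => (D * Λ) j u)) :
    IsMinOn (entropicCost γ fun t : Fin m × Fin n × Fin s => M t.2.1 t.2.2) (jointPlans p Λ)
      (fun t => T t.1 t.2.1 t.2.2) := by
  have hcost (Y : Fin m × Fin n × Fin s → ℝ) :
      entropicCost γ (fun t => M t.2.1 t.2.2) Y =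
        ∑ u, smoothedCost γ M (Matrix.of fun i j => Y (u, i, j)) := by
    simp only [smoothedCost_eq_entropicCost, entropicCost, Fintype.sum_prod_type, Matrix.of_apply]
  refine isMinOn_iff.2 fun Y ⟨D', hY⟩ => ?_
  have hD' u := mem_simplex_of_mem_transportPolytope (hp u) (hY u)
  calc entropicCost γ _ _ = ∑ u, Wsmooth γ M (p u) (fun j => (D * Λ) j u) :=
        (hcost fun t => T t.1 t.2.1 t.2.2).trans (sum_congr rfl fun u _ => hTW u)
    _ ≤ ∑ u, Wsmooth γ M (p u) (fun j => (D' * Λ) j u) := hmin D' hD'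
    _ ≤ ∑ u, smoothedCost γ M (Matrix.of fun i j => Y (u, i, j)) := sum_le_sum fun u _ =>
        (isLeast_Wsmooth γ M (hp u) (hD' u)).2 (Set.mem_image_of_mem _ (hY u))
    _ = _ := (hcost Y).symm

-- Moving mass from column `j₀` to column `j` at rate `r u i` keeps the family feasible when the
-- induced change of the second marginals is realized by adding `v` to row `j` of the dictionary and
-- subtracting it from row `j₀`.
lemma sum_mul_jointGradient_sub_eq_zero (hX : X ∈ jointPlans p Λ)
    (hmin : IsMinOn (entropicCost γ fun t => M t.2.1 t.2.2) (jointPlans p Λ) X)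
    {r : Fin m → Fin n → ℝ} {v : Fin k → ℝ} (hr : ∀ u, ∑ i, r u i = Matrix.vecMul v Λ u)
    (hrX : ∀ u i j, X (u, i, j) = 0 → r u i = 0) (j j₀ : Fin s) :
    ∑ u, ∑ i, r u i * (jointGradient γ M X (u, i, j) - jointGradient γ M X (u, i, j₀)) = 0 := by
  set d : Fin s → ℝ := Pi.single j 1 - Pi.single j₀ 1 with hd
  have hd_sum : ∑ j', d j' = 0 := by simp [hd]
  have hd_dot (f : Fin s → ℝ) : ∑ j', f j' * d j' = f j - f j₀ := by
    simp [hd, mul_sub, Pi.single_apply]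
  have hstationary : jointGradient γ M X ⬝ᵥ (fun t => r t.1 t.2.1 * d t.2.2) = 0 := by
    refine entropicGradient_dotProduct_eq_zero (nonneg_of_mem_jointPlans hX) hmin
      (fun t ht => by rw [hrX t.1 t.2.1 t.2.2 ht, zero_mul]) fun t ht => ?_
    obtain ⟨D, hD⟩ := hX
    refine ⟨D + t • Matrix.vecMulVec d v, fun u => ⟨fun i j' => ht (u, i, j'), fun i => ?_,
      fun j' => ?_⟩⟩
    · have hrow : ∑ j', X (u, i, j') = p u i := (hD u).2.1 i
      simp [sum_add_distrib, ← mul_sum, hd_sum, hrow]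
    · have hcol : ∑ i, X (u, i, j') = (D * Λ) j' u := (hD u).2.2 j'
      simp [sum_add_distrib, ← mul_sum, ← sum_mul, hcol, hr, Matrix.add_mul,
        Matrix.vecMulVec_mul, Matrix.vecMulVec_apply, mul_comm]
  rw [← hstationary]
  simp only [dotProduct, Fintype.sum_prod_type, mul_left_comm _ (r _ _), ← mul_sum, hd_dot]

lemma jointGradient_sub_eq_of_pos (hX : X ∈ jointPlans p Λ)
    (hmin : IsMinOn (entropicCost γ fun t => M t.2.1 t.2.2) (jointPlans p Λ) X) {u : Fin m}
    {i i' : Fin n} (hi : ∀ j, 0 < X (u, i, j)) (hi' : ∀ j, 0 < X (u, i', j)) (j j₀ : Fin s) :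
    jointGradient γ M X (u, i, j) - jointGradient γ M X (u, i, j₀) =
      jointGradient γ M X (u, i', j) - jointGradient γ M X (u, i', j₀) := by
  have hzero := sum_mul_jointGradient_sub_eq_zero hX hmin
    (r := Pi.single u (Pi.single i 1 - Pi.single i' 1)) (v := 0)
    (fun u' => by rcases eq_or_ne u' u with rfl | hu <;> simp [*])
    (fun u' i₁ j₁ h => ?_) j j₀
  · rw [Fintype.sum_eq_single u fun u' hu => by simp [hu]] at hzero
    simpa [sub_mul, sum_sub_distrib, Pi.single_apply, sub_eq_zero] using hzero
  · rcases eq_or_ne u' u with rfl | hu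
    · have hne : i₁ ≠ i := by rintro rfl; exact (hi j₁).ne' h
      have hne' : i₁ ≠ i' := by rintro rfl; exact (hi' j₁).ne' h
      simp [hne, hne']
    · simp [hu]

lemma sum_mul_jointGradient_sub_eq_zero_of_pos (hX : X ∈ jointPlans p Λ)
    (hmin : IsMinOn (entropicCost γ fun t => M t.2.1 t.2.2) (jointPlans p Λ) X)
    {i : Fin m → Fin n} (hi : ∀ u j, 0 < X (u, i u, j)) (l : Fin k) (j j₀ : Fin s) :
    ∑ u, Λ l u * (jointGradient γ M X (u, i u, j) - jointGradient γ M X (u, i u, j₀)) = 0 := by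
  have hzero := sum_mul_jointGradient_sub_eq_zero hX hmin
    (r := fun u => Pi.single (i u) (Λ l u)) (v := Pi.single l 1) (by simp)
    (fun u i' j' h => Pi.single_eq_of_ne (by rintro rfl; exact (hi u j').ne' h) _) j j₀
  simpa [Pi.single_apply] using hzero

lemma exists_jointGradient_eq_add (hp : ∀ u, p u ∈ simplex n) (j₀ : Fin s)
    (hX : X ∈ jointPlans p Λ)
    (hmin : IsMinOn (entropicCost γ fun t => M t.2.1 t.2.2) (jointPlans p Λ) X)
    (hpos : ∀ u i j, 0 < p u i → 0 < X (u, i, j)) :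
    ∃ (G : Matrix (Fin s) (Fin m) ℝ) (a : Fin m → Fin n → ℝ), G * Λ.transpose = 0 ∧
      ∀ u i j, 0 < p u i → jointGradient γ M X (u, i, j) = a u i + G j u := by
  choose i₀ hi₀ using fun u => exists_pos_of_mem_simplex (hp u)
  refine ⟨Matrix.of fun j u =>
      jointGradient γ M X (u, i₀ u, j) - jointGradient γ M X (u, i₀ u, j₀),
    fun u i => jointGradient γ M X (u, i, j₀), ?_, fun u i j hpi => ?_⟩
  · ext j l
    simpa only [Matrix.mul_apply, Matrix.transpose_apply, Matrix.of_apply, Matrix.zero_apply,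
      mul_comm] using
      sum_mul_jointGradient_sub_eq_zero_of_pos hX hmin (fun u j => hpos u _ j (hi₀ u)) l j j₀
  · exact sub_eq_iff_eq_add'.1 (jointGradient_sub_eq_of_pos hX hmin (fun j => hpos u i j hpi)
      (fun j => hpos u _ j (hi₀ u)) j j₀)

end JointPlans

lemma exists_eq_HstarGrad_of_forall_sum_Wsmooth_le {n s m k : ℕ} {γ : ℝ} (hγ : 0 < γ)
    {M : Matrix (Fin n) (Fin s) ℝ} {p : Fin m → Fin n → ℝ} (hp : ∀ u, p u ∈ simplex n)
    {Λ : Matrix (Fin k) (Fin m) ℝ} {D : Matrix (Fin s) (Fin k) ℝ}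
    (hD : ∀ u, (fun j => (D * Λ) j u) ∈ simplex s)
    (hmin : ∀ D' : Matrix (Fin s) (Fin k) ℝ, (∀ u, (fun j => (D' * Λ) j u) ∈ simplex s) →
      ∑ u, Wsmooth γ M (p u) (fun j => (D * Λ) j u) ≤
        ∑ u, Wsmooth γ M (p u) (fun j => (D' * Λ) j u)) :
    ∃ G : Matrix (Fin s) (Fin m) ℝ, G * Λ.transpose = 0 ∧
      ∀ u, (fun j => (D * Λ) j u) = HstarGrad γ M (p u) (fun j => G j u) := by
  rcases isEmpty_or_nonempty (Fin s) with hs | ⟨⟨j₀⟩⟩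
  · exact ⟨0, Matrix.zero_mul _, fun u => Subsingleton.elim _ _⟩
  choose T hT hTW using fun u => (isLeast_Wsmooth γ M (hp u) (hD u)).1
  have hX : (fun t : Fin m × Fin n × Fin s => T t.1 t.2.1 t.2.2) ∈ jointPlans p Λ := ⟨D, hT⟩
  have hXmin := isMinOn_jointPlans hp hmin hTW
  obtain ⟨Y, hY, hYpos⟩ := exists_mem_jointPlans_forall_pos hp hD
  have hTpos (u i j) (hpi : 0 < p u i) : 0 < T u i j :=
    pos_of_isMinOn_entropicCost hγ (convex_jointPlans p Λ) (fun _ => nonneg_of_mem_jointPlans)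
      hX hXmin hY (hYpos u i j hpi)
  obtain ⟨G, a, hG, ha⟩ := exists_jointGradient_eq_add hp j₀ hX hXmin hTpos
  refine ⟨G, hG, fun u => ?_⟩
  have hsupp (i) (hpi : p u i ≠ 0) : 0 < p u i := ((hp u).1 i).lt_of_ne' hpi
  have hgibbs : T u = gibbsPlan γ M (p u) fun j => G j u :=
    eq_gibbsPlan_of_potentials hγ.ne' (hT u) (fun i hpi j => hTpos u i j (hsupp i hpi))
      fun i hpi j => ha u i j (hsupp i hpi)
  have : Nonempty (Fin s) := ⟨j₀⟩
  exact eq_of_mem_transportPolytope_right (hT u)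
    (hgibbs ▸ gibbsPlan_mem_transportPolytope γ M (hp u).1 _)

theorem wcf_d_step_general {n s m k : ℕ} {γ : ℝ} (hγ : 0 < γ) {M : Matrix (Fin n) (Fin s) ℝ}
    {p : Fin m → Fin n → ℝ} (hp : ∀ u, p u ∈ simplex n) {Λ : Matrix (Fin k) (Fin m) ℝ}
    {D : Matrix (Fin s) (Fin k) ℝ} (hfeas : ∀ u, (fun j => (D * Λ) j u) ∈ simplex s)
    (hmin : ∀ D' : Matrix (Fin s) (Fin k) ℝ,
      (∀ u, (fun j => (D' * Λ) j u) ∈ simplex s) →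
      ∑ u, Wsmooth γ M (p u) (fun j => (D * Λ) j u) ≤
        ∑ u, Wsmooth γ M (p u) (fun j => (D' * Λ) j u)) :
    (∃ G : Matrix (Fin s) (Fin m) ℝ,
        G * Λ.transpose = 0 ∧
        (∀ G' : Matrix (Fin s) (Fin m) ℝ, G' * Λ.transpose = 0 →
          ∑ u, Hstar γ M (p u) (fun j => G j u) ≤
            ∑ u, Hstar γ M (p u) (fun j => G' j u)) ∧
        ∀ u : Fin m, (fun j => (D * Λ) j u) = HstarGrad γ M (p u) (fun j => G j u)) ∧
    (Function.Injective (fun x : Fin k → ℝ => Matrix.vecMul x Λ) →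
      ∀ D' : Matrix (Fin s) (Fin k) ℝ,
        (∀ u, (fun j => (D' * Λ) j u) ∈ simplex s) →
        (∀ D'' : Matrix (Fin s) (Fin k) ℝ,
          (∀ u, (fun j => (D'' * Λ) j u) ∈ simplex s) →
          ∑ u, Wsmooth γ M (p u) (fun j => (D' * Λ) j u) ≤
            ∑ u, Wsmooth γ M (p u) (fun j => (D'' * Λ) j u)) →
        D' = D) := by
  obtain ⟨G, hG, hgrad⟩ := exists_eq_HstarGrad_of_forall_sum_Wsmooth_le hγ hp hfeas hmin
  have hgap := (sum_Hstar_add_sum_Wsmooth_eq_zero_iff hγ M hp hG hfeas).2 hgrad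
  refine ⟨⟨G, hG, fun G' hG' => ?_, hgrad⟩, fun hΛ D' hfeas' hmin' => ?_⟩
  · linarith [sum_Hstar_add_sum_Wsmooth_nonneg hγ M hp hG' hfeas]
  · have hgap' := (sum_Hstar_add_sum_Wsmooth_nonneg hγ M hp hG hfeas').antisymm'
      (by linarith [hmin' D hfeas])
    have hgrad' := (sum_Hstar_add_sum_Wsmooth_eq_zero_iff hγ M hp hG hfeas').1 hgap'
    ext j l
    exact congrFun (hΛ (funext fun u => congrFun ((hgrad' u).trans (hgrad u).symm) j)) l

/-- D step of WCF: if D* minimizes D ↦ Σ_u W_γ(p_u, (DΛ)_u) subject to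
each column of DΛ lying in Σ_s, then there is G* minimizing G ↦ Σ_u H_{p_u}*(G_u) over
{G : GΛᵀ = 0} with (D*Λ)_u = α_u ⊙ Kᵀ(p_u ⊘ Kα_u), α_u = e^{G*_u/γ} for every u; and if
Λ has full row rank, the minimizer D* is unique. -/
theorem wcf_d_step
    (n s m k : ℕ) (hn : 0 < n) (hs : 0 < s) (hm : 0 < m) (hk : 0 < k)
    (γ : ℝ) (hγ : 0 < γ)
    (M : Matrix (Fin n) (Fin s) ℝ) (hM : ∀ i j, 0 ≤ M i j)
    (p : Fin m → Fin n → ℝ) (hp : ∀ u, p u ∈ simplex n) (hp' : ∀ u i, 0 < p u i)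
    (Λ : Matrix (Fin k) (Fin m) ℝ)
    (D : Matrix (Fin s) (Fin k) ℝ)
    (hfeas : ∀ u, (fun j => (D * Λ) j u) ∈ simplex s)
    (hmin : ∀ D' : Matrix (Fin s) (Fin k) ℝ,
      (∀ u, (fun j => (D' * Λ) j u) ∈ simplex s) →
      ∑ u, Wsmooth γ M (p u) (fun j => (D * Λ) j u) ≤
        ∑ u, Wsmooth γ M (p u) (fun j => (D' * Λ) j u)) :
    (∃ G : Matrix (Fin s) (Fin m) ℝ,
        G * Λ.transpose = 0 ∧
        (∀ G' : Matrix (Fin s) (Fin m) ℝ, G' * Λ.transpose = 0 →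
          ∑ u, Hstar γ M (p u) (fun j => G j u) ≤
            ∑ u, Hstar γ M (p u) (fun j => G' j u)) ∧
        ∀ u : Fin m, (fun j => (D * Λ) j u) = HstarGrad γ M (p u) (fun j => G j u)) ∧
    (Function.Injective (fun x : Fin k → ℝ => Matrix.vecMul x Λ) →
      ∀ D' : Matrix (Fin s) (Fin k) ℝ,
        (∀ u, (fun j => (D' * Λ) j u) ∈ simplex s) →
        (∀ D'' : Matrix (Fin s) (Fin k) ℝ,
          (∀ u, (fun j => (D'' * Λ) j u) ∈ simplex s) →
          ∑ u, Wsmooth γ M (p u) (fun j => (D' * Λ) j u) ≤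
            ∑ u, Wsmooth γ M (p u) (fun j => (D'' * Λ) j u)) →
        D' = D) :=
  wcf_d_step_general hγ hp hfeas hmin
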